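/- arXiv:1905.03177 — 3 statements merged into one kernel-verified Lean document; each statement's English description precedes it below -/
import Mathlib

section
/- Let S = {(x₁,1), (x₂,−1)} ⊆ ℝ^d × {−1,+1}, fix ε ∈ [0,∞] and r > 0, and let S' = {(x_i + z_i^{(j)}, y_i) : i ∈ {1,2}, j ∈ [N]} where the z_i^{(j)} are i.i.d. uniform on the sphere of radius r in ℝ^d. There exist absolute constants C₁, C₂ > 0 such that if N > d, then with probability at least 1 − 2e^{−C₂·d·log(N/d)}, the following holds: if R_ε(S ∪ S') ≠ ∅, then there exists f ∈ R_ε(S ∪ S') such that γ_f(S,S') ≤ √(C₁·log(2N/d)/d)·r. -/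
open scoped RealInnerProductSpace ENNReal Classical
open Metric Set MeasureTheory

noncomputable section

/-- `ℝ^d` with the Euclidean (ℓ²) structure. -/
abbrev Euc (d : ℕ) := EuclideanSpace ℝ (Fin d)

/-- `X₊`: the set of points of `T` with label `1`. -/
def posPts {d : ℕ} (T : Set (Euc d × ℝ)) : Set (Euc d) := {x | (x, (1 : ℝ)) ∈ T}

/-- `X₋`: the set of points of `T` with label `-1`. -/
def negPts {d : ℕ} (T : Set (Euc d × ℝ)) : Set (Euc d) := {x | (x, (-1 : ℝ)) ∈ T}

/-- All labels in `T` are `±1`, i.e. `T ⊆ ℝ^d × {-1, +1}`. -/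
def LabelsPM {d : ℕ} (T : Set (Euc d × ℝ)) : Prop := ∀ p ∈ T, p.2 = 1 ∨ p.2 = -1

/-- `(w, b)` is a linear separator of the labeled set `T`:
`w ≠ 0` and `y(⟨w,x⟩ + b) ≥ 0` for all `(x,y) ∈ T`. -/
def IsLinSep {d : ℕ} (w : Euc d) (b : ℝ) (T : Set (Euc d × ℝ)) : Prop :=
  w ≠ 0 ∧ ∀ p ∈ T, p.2 * (⟪w, p.1⟫ + b) ≥ 0

/-- The hyperplane `H = {x | ⟨w,x⟩ + b = 0}` associated with `(w, b)`. -/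
def hyperplane {d : ℕ} (w : Euc d) (b : ℝ) : Set (Euc d) := {x | ⟪w, x⟫ + b = 0}

/-- The margin `γ_{(w,b)}(S)`: infimum over `(x,y) ∈ S` of the distance from `x`
to the hyperplane of `(w,b)`. -/
def linMargin {d : ℕ} (S : Set (Euc d × ℝ)) (w : Euc d) (b : ℝ) : ℝ :=
  ⨅ p : S, Metric.infDist (p : Euc d × ℝ).1 (hyperplane w b)

/-- `γ` is the max-margin of `S`: attained by some linear separator of `S`, and an upper
bound on the margin of every linear separator of `S`. -/
def IsMaxMargin {d : ℕ} (S : Set (Euc d × ℝ)) (γ : ℝ) : Prop :=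
  (∃ w b, IsLinSep w b S ∧ linMargin S w b = γ) ∧
    ∀ w b, IsLinSep w b S → linMargin S w b ≤ γ

/-- The worst-case margin `α(S,S')` (an extended real): the infimum over all linear
separators of `S ∪ S'` of their margin on `S`, or `-∞` if no separator exists. -/
def alpha {d : ℕ} (S S' : Set (Euc d × ℝ)) : EReal :=
  if ∃ w b, IsLinSep w b (S ∪ S') then
    sInf {m : EReal | ∃ w b, IsLinSep w b (S ∪ S') ∧ m = ((linMargin S w b : ℝ) : EReal)}
  else ⊥

/-- `S_r`: the set of labeled points obtained by moving a point of `S` by distance at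
most `r`, keeping its label; i.e. `((X₊)_r × {1}) ∪ ((X₋)_r × {-1})`. -/
def ballAug {d : ℕ} (S : Set (Euc d × ℝ)) (r : ℝ) : Set (Euc d × ℝ) :=
  {p | (p.2 = 1 ∧ Metric.infDist p.1 (posPts S) ≤ r) ∨
       (p.2 = -1 ∧ Metric.infDist p.1 (negPts S) ≤ r)}

/-- A `{±1}`-valued classifier. -/
def IsClassifier {d : ℕ} (f : Euc d → ℝ) : Prop := ∀ x, f x = 1 ∨ f x = -1

/-- `f` separates the labeled set `T`: `f x = y` for all `(x,y) ∈ T`. -/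
def Separates {d : ℕ} (f : Euc d → ℝ) (T : Set (Euc d × ℝ)) : Prop :=
  ∀ p ∈ T, f p.1 = p.2

/-- The circumradius of `A`: the radius of the smallest closed ball containing `A`
(as an extended nonnegative real). -/
def circumradius {d : ℕ} (A : Set (Euc d)) : ℝ≥0∞ :=
  ⨅ c : Euc d, ⨆ x ∈ A, edist c x

/-- `f` is `ε`-respectful of `T`: `f = 1` on the convex hull of any subset of `X₊(T)` of
circumradius at most `ε`, and `f = -1` on the convex hull of any subset of `X₋(T)` of
circumradius at most `ε`. (Taking `ε = ⊤` gives respectful classifiers.) -/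
def RespectfulOf {d : ℕ} (ε : ℝ≥0∞) (f : Euc d → ℝ) (T : Set (Euc d × ℝ)) : Prop :=
  (∀ A ⊆ posPts T, circumradius A ≤ ε → ∀ x ∈ convexHull ℝ A, f x = 1) ∧
  (∀ B ⊆ negPts T, circumradius B ≤ ε → ∀ x ∈ convexHull ℝ B, f x = -1)

/-- `R_ε(T)`, the set of `ε`-respectful classifiers of `T`. -/
def respectfulSet {d : ℕ} (ε : ℝ≥0∞) (T : Set (Euc d × ℝ)) : Set (Euc d → ℝ) :=
  {f | IsClassifier f ∧ RespectfulOf ε f T}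

/-- The margin `γ_f(S)` of a classifier `f` on `S`:
`min_{(x,y) ∈ S} d(x, f⁻¹(-y))`. -/
def clsMargin {d : ℕ} (f : Euc d → ℝ) (S : Set (Euc d × ℝ)) : ℝ :=
  ⨅ p : S, Metric.infDist (p : Euc d × ℝ).1 (f ⁻¹' {-(p : Euc d × ℝ).2})

/-- `γ_f(S,S')`: the margin of `f` on `S` if `f` separates `S ∪ S'`, and `-∞` otherwise. -/
def clsMarginAug {d : ℕ} (f : Euc d → ℝ) (S S' : Set (Euc d × ℝ)) : EReal :=
  if Separates f (S ∪ S') then ((clsMargin f S : ℝ) : EReal) else ⊥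

/-- The distance `d(P, Q) = inf {d(a,b) | a ∈ P, b ∈ Q}` between two sets,
as an extended nonnegative real. -/
def setSepDist {d : ℕ} (P Q : Set (Euc d)) : ℝ≥0∞ :=
  ⨅ a ∈ P, EMetric.infEdist a Q

/-- The uniform (rotation-invariant) probability measure on the sphere of radius `r`
centered at the origin in `ℝ^d`, obtained by normalizing the surface measure induced by
Lebesgue measure on the unit sphere and pushing forward by scaling by `r`. -/
def uniformSphere (d : ℕ) (r : ℝ) : Measure (Euc d) :=
  (((volume : Measure (Euc d)).toSphere) Set.univ)⁻¹ •
    ((((volume : Measure (Euc d)).toSphere).map (Subtype.val)).map (fun x => r • x))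

end


lemma maurey_aux {d : ℕ} {ι : Type} (p : ι → Euc d) (r : ℝ) (c : Euc d)
    (hp : ∀ i, ‖p i - c‖ ≤ r) (x : Euc d) (hx : x ∈ convexHull ℝ (Set.range p)) (k : ℕ) :
    ∃ m : Multiset ι, Multiset.card m = k ∧
      ‖(m.map p).sum - (k : ℝ) • x‖ ^ 2 ≤ k * (2 * r) ^ 2 := by
  have hxc : ‖x - c‖ ≤ r := by
    have h : convexHull ℝ (Set.range p) ⊆ closedBall c r := by
      apply convexHull_min _ (convex_closedBall c r)
      rintro _ ⟨i, rfl⟩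
      simpa [dist_eq_norm] using hp i
    simpa [dist_eq_norm] using h hx
  induction k with
  | zero => exact ⟨0, by simp, by simp⟩
  | succ k ih =>
    obtain ⟨m, hm, hb⟩ := ih
    set v := (m.map p).sum - (k : ℝ) • x with hv
    have hconc : ConcaveOn ℝ (convexHull ℝ (Set.range p)) (fun y => ⟪v, y⟫) :=
      ((innerSL ℝ v).toLinearMap.concaveOn (convex_convexHull ℝ _))
    obtain ⟨_, ⟨i, rfl⟩, hi⟩ := hconc.exists_le_of_mem_convexHull (subset_convexHull ℝ _) hx
    refine ⟨i ::ₘ m, by simp [hm], ?_⟩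
    have e : ((i ::ₘ m).map p).sum - ((k + 1 : ℕ) : ℝ) • x = v + (p i - x) := by
      rw [hv, Multiset.map_cons, Multiset.sum_cons]; push_cast; rw [add_smul, one_smul]; abel
    rw [e, norm_add_sq_real, inner_sub_right]
    have h2 : ‖p i - x‖ ≤ 2 * r := by
      calc ‖p i - x‖ = ‖(p i - c) - (x - c)‖ := by congr 1; abel
        _ ≤ ‖p i - c‖ + ‖x - c‖ := norm_sub_le _ _
        _ ≤ 2 * r := by linarith [hp i]
    have h3 : ‖p i - x‖ ^ 2 ≤ (2 * r) ^ 2 := by gcongr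
    push_cast
    linarith

lemma cover_aux {d : ℕ} {κ : Type} [Fintype κ] (c : Euc d) (R s : ℝ)
    (hR : 0 ≤ R) (hs : 0 ≤ s) (q : κ → Euc d)
    (h : closedBall c R ⊆ ⋃ i, closedBall (q i) s) :
    R ^ d ≤ Fintype.card κ * s ^ d := by
  have h1 : volume (closedBall c R) ≤ ∑ i, volume (closedBall (q i) s) := by
    refine (measure_mono h).trans ?_
    exact (measure_iUnion_le _).trans (by rw [tsum_fintype])
  simp only [Measure.addHaar_closedBall _ _ hR, Measure.addHaar_closedBall _ _ hs,
    Finset.sum_const, finrank_euclideanSpace, Fintype.card_fin, nsmul_eq_mul] at h1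
  rw [← mul_assoc, ENNReal.mul_le_mul_iff_left (measure_ball_pos _ _ one_pos).ne'
    measure_ball_lt_top.ne, ← ENNReal.ofReal_natCast, ← ENNReal.ofReal_mul (by positivity),
    ENNReal.ofReal_le_ofReal_iff (by positivity)] at h1
  exact h1

lemma count_aux (N k : ℕ) (hk : 0 < k) (hkN : k ≤ N) :
    ((Nat.multichoose (N + 1) k : ℕ) : ℝ) ≤ (Real.exp 1 * (2 * N / k)) ^ k := by
  rw [Nat.multichoose_eq]
  have e : N + 1 + k - 1 = N + k := by omega
  rw [e]
  have hk' : (0 : ℝ) < k := by exact_mod_cast hk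
  have h1 : (((N + k).choose k : ℕ) : ℝ) ≤ ((N + k : ℕ) : ℝ) ^ k / (k.factorial : ℝ) :=
    Nat.choose_le_pow_div k (N + k)
  have h2 : ((N + k : ℕ) : ℝ) ≤ 2 * N := by
    push_cast
    have : (k : ℝ) ≤ N := by exact_mod_cast hkN
    linarith
  have h3 : (k : ℝ) ^ k / (k.factorial : ℝ) ≤ Real.exp k :=
    Real.pow_div_factorial_le_exp (k : ℝ) hk'.le k
  have h4 : Real.exp k = Real.exp 1 ^ k := by rw [← Real.exp_nat_mul]; simp
  calc _ ≤ _ := h1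
    _ ≤ (2 * N : ℝ) ^ k / (k.factorial : ℝ) := by gcongr
    _ = ((k : ℝ) ^ k / (k.factorial : ℝ)) * (2 * N / k) ^ k := by
      rw [div_pow]; field_simp
    _ ≤ Real.exp k * (2 * N / k) ^ k := by gcongr
    _ = _ := by rw [h4, mul_pow]

lemma not_ball_subset {d N : ℕ} (hd : 0 < d) (hN : d < N) (p : Option (Fin N) → Euc d)
    (c : Euc d) (r : ℝ) (hr : 0 < r) (hp : ∀ i, ‖p i - c‖ ≤ r)
    (h : closedBall c (Real.sqrt (9 * Real.exp 9 * Real.log (2 * (N : ℝ) / d) / d) * r) ⊆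
      convexHull ℝ (Set.range p)) : False := by
  set L := Real.log (2 * (N : ℝ) / d) with hL
  have hd' : (0 : ℝ) < d := by exact_mod_cast hd
  have hN' : (d : ℝ) < N := by exact_mod_cast hN
  have hN0 : (0 : ℝ) < N := hd'.trans hN'
  have hL2 : 1 / 2 < L := by
    have h1 : Real.log 2 ≤ L := by
      apply Real.log_le_log (by norm_num)
      rw [le_div_iff₀ hd']; linarith
    linarith [Real.log_two_gt_d9]
  have hL0 : 0 < L := by linarith
  set R := Real.sqrt (9 * Real.exp 9 * L / d) * r with hRdef
  have hR0 : 0 ≤ R := by positivity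
  have hR2 : R ^ 2 = 9 * Real.exp 9 * L / d * r ^ 2 := by
    rw [hRdef, mul_pow, Real.sq_sqrt (by positivity)]
  by_cases hc : (d : ℝ) ≤ L
  · have hsub : closedBall c R ⊆ ⋃ _i : Unit, closedBall c r := by
      refine h.trans ?_
      rw [iUnion_const]
      apply convexHull_min _ (convex_closedBall c r)
      rintro _ ⟨i, rfl⟩
      simpa [dist_eq_norm] using hp i
    have h1 := cover_aux c R r hR0 hr.le (fun _ : Unit => c) hsub
    simp only [Fintype.card_unit, Nat.cast_one, one_mul] at h1
    have h2 : R ≤ r := le_of_pow_le_pow_left₀ hd.ne' hr.le h1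
    have h3 : R ^ 2 ≤ r ^ 2 := by gcongr
    have h4 : 1 ≤ L / d := by rwa [le_div_iff₀ hd', one_mul]
    have h5 : (1 : ℝ) < Real.exp 9 := by simp
    have h6 : 9 < 9 * Real.exp 9 * (L / d) := by nlinarith
    have h7 : 0 < r ^ 2 := by positivity
    rw [hR2, mul_div_assoc] at h3
    nlinarith
  push Not at hc
  obtain ⟨k, hkdef⟩ : ∃ k : ℕ, k = ⌈(d : ℝ) / (2 * L)⌉₊ := ⟨_, rfl⟩
  have hk1 : (d : ℝ) / (2 * L) ≤ k := by rw [hkdef]; exact Nat.le_ceil _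
  have hk2 : (k : ℝ) ≤ (d : ℝ) / (2 * L) + 1 := by
    rw [hkdef]; exact (Nat.ceil_lt_add_one (by positivity)).le
  have hk0' : (0 : ℝ) < k := lt_of_lt_of_le (by positivity) hk1
  have hk0 : 0 < k := by exact_mod_cast hk0'
  have hkd : k ≤ d := by
    rw [hkdef]; apply Nat.ceil_le.2
    rw [div_le_iff₀ (by positivity)]; nlinarith
  have hkN : k ≤ N := by omega
  have hkL : (k : ℝ) * L ≤ 3 / 2 * d := by
    calc (k : ℝ) * L ≤ ((d : ℝ) / (2 * L) + 1) * L := by gcongr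
      _ = d / 2 + L := by field_simp
      _ ≤ _ := by linarith
  set s := 2 * r / Real.sqrt k with hs
  have hs0 : 0 < s := by positivity
  have hsub : closedBall c R ⊆
      ⋃ m : Sym (Option (Fin N)) k, closedBall ((1 / (k : ℝ)) • (m.1.map p).sum) s := by
    intro x hx
    obtain ⟨m, hm, hb⟩ := maurey_aux p r c hp x (h hx) k
    rw [mem_iUnion]
    refine ⟨⟨m, hm⟩, ?_⟩
    rw [mem_closedBall, dist_comm, dist_eq_norm]
    have e : (1 / (k : ℝ)) • (m.map p).sum - x
        = (1 / (k : ℝ)) • ((m.map p).sum - (k : ℝ) • x) := by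
      rw [smul_sub, smul_smul, one_div, inv_mul_cancel₀ hk0'.ne', one_smul]
    rw [e, norm_smul]
    apply le_of_sq_le_sq _ hs0.le
    rw [mul_pow, hs, div_pow, Real.sq_sqrt hk0'.le]
    rw [Real.norm_eq_abs, sq_abs]
    calc _ ≤ (1 / (k : ℝ)) ^ 2 * (k * (2 * r) ^ 2) := by gcongr
      _ = _ := by field_simp
  have h1 := cover_aux c R s hR0 hs0.le _ hsub
  rw [Sym.card_sym_eq_multichoose, Fintype.card_option, Fintype.card_fin] at h1
  have h2 := count_aux N k hk0 hkN
  have h3 : Real.exp 1 * (2 * N / k) ≤ Real.exp (3 * L) := by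
    have e1 : Real.exp L = 2 * N / d := Real.exp_log (by positivity)
    have e2 : (d : ℝ) / k ≤ 2 * L := by
      rw [div_le_iff₀ hk0']
      rw [div_le_iff₀ (by positivity)] at hk1
      linarith
    have e3 : 2 * L ≤ Real.exp (2 * L - 1) := by linarith [Real.add_one_le_exp (2 * L - 1)]
    calc Real.exp 1 * (2 * N / k) = Real.exp 1 * ((2 * N / d) * (d / k)) := by field_simp
      _ ≤ Real.exp 1 * (Real.exp L * Real.exp (2 * L - 1)) := by
        rw [e1]; gcongr; exact e2.trans e3
      _ = Real.exp (3 * L) := by rw [← Real.exp_add, ← Real.exp_add]; congr 1; ring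
  have h4 : (Real.exp 1 * (2 * N / k)) ^ k ≤ (Real.exp (9 / 2)) ^ d := by
    calc _ ≤ (Real.exp (3 * L)) ^ k := by gcongr
      _ = Real.exp (k * (3 * L)) := by rw [Real.exp_nat_mul]
      _ ≤ Real.exp (d * (9 / 2)) := by apply Real.exp_le_exp.2; linarith
      _ = _ := by rw [Real.exp_nat_mul]
  have h5 : R ^ d ≤ (Real.exp (9 / 2) * s) ^ d := by
    rw [mul_pow (Real.exp (9 / 2)) s d]
    exact h1.trans (mul_le_mul_of_nonneg_right (h2.trans h4) (by positivity))
  have h6 : R ≤ Real.exp (9 / 2) * s := le_of_pow_le_pow_left₀ hd.ne' (by positivity) h5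
  have h7 : R ^ 2 ≤ (Real.exp (9 / 2) * s) ^ 2 := by gcongr
  have e9 : Real.exp (9 / 2) ^ 2 = Real.exp 9 := by
    rw [← Real.exp_nat_mul]; norm_num
  rw [hR2, mul_pow, e9, hs, div_pow, Real.sq_sqrt hk0'.le] at h7
  have h8 : 9 * L / d ≤ 4 / k := by
    have hpos : 0 < Real.exp 9 * r ^ 2 := by positivity
    refine le_of_mul_le_mul_left ?_ hpos
    calc _ = 9 * Real.exp 9 * L / d * r ^ 2 := by ring
      _ ≤ _ := h7
      _ = _ := by ring
  rw [div_le_div_iff₀ hd' hk0'] at h8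
  rw [div_le_iff₀ (by positivity)] at hk1
  nlinarith

lemma uniformSphere_sphere {d : ℕ} (hd : 0 < d) (r : ℝ) (hr : 0 < r) :
    IsProbabilityMeasure (uniformSphere d r) ∧ uniformSphere d r (sphere 0 r) = 1 := by
  haveI : Nonempty (Fin d) := ⟨⟨0, hd⟩⟩
  have hm : Measurable (fun x : Euc d => r • x) := by fun_prop
  have h0 : ((volume : Measure (Euc d)).toSphere) Set.univ ≠ 0 := by
    rw [Measure.toSphere_apply_univ]
    simp only [finrank_euclideanSpace, Fintype.card_fin]
    exact mul_ne_zero (by exact_mod_cast hd.ne') (measure_ball_pos _ _ one_pos).ne'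
  have h1 : ((volume : Measure (Euc d)).toSphere) Set.univ ≠ ⊤ := measure_ne_top _ _
  have key : ∀ s : Set (Euc d), MeasurableSet s → sphere 0 r ⊆ s → uniformSphere d r s = 1 := by
    intro s hs hsub
    rw [uniformSphere, Measure.smul_apply, Measure.map_apply hm hs,
      Measure.map_apply measurable_subtype_coe (hm hs)]
    have : (Subtype.val ⁻¹' ((fun x : Euc d => r • x) ⁻¹' s) : Set (sphere (0 : Euc d) 1))
        = univ := by
      apply eq_univ_of_forall
      intro x
      apply hsub
      simp [norm_smul, abs_of_pos hr]
    rw [this, smul_eq_mul, ENNReal.inv_mul_cancel h0 h1]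
  exact ⟨⟨key _ MeasurableSet.univ (subset_univ _)⟩,
    key _ isClosed_sphere.measurableSet subset_rfl⟩

/-- Theorem 22 of the paper: for `S = {(x₁,1),(x₂,-1)}` augmented by
`N > d` uniform spherical perturbations of radius `r` of each point, there are absolute
constants `C₁, C₂ > 0` such that with probability at least `1 - 2e^{-C₂ d log(N/d)}`,
if `R_ε(S ∪ S') ≠ ∅` then some `f ∈ R_ε(S ∪ S')` has
`γ_f(S,S') ≤ √(C₁ log(2N/d)/d)·r`. -/
theorem respectful_margin_upper_bound :
    ∃ C₁ C₂ : ℝ, 0 < C₁ ∧ 0 < C₂ ∧ ∀ (d N : ℕ), 0 < d → d < N →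
      ∀ (x₁ x₂ : Euc d) (ε : ℝ≥0∞) (r : ℝ), 0 < r →
      ∀ S : Set (Euc d × ℝ), S = {(x₁, (1 : ℝ)), (x₂, (-1 : ℝ))} →
      ∀ S' : (Fin 2 × Fin N → Euc d) → Set (Euc d × ℝ),
        (∀ z, S' z = Set.range fun p : Fin 2 × Fin N =>
          (![x₁, x₂] p.1 + z p, ![(1 : ℝ), -1] p.1)) →
      ENNReal.ofReal (1 - 2 * Real.exp (-C₂ * d * Real.log ((N : ℝ) / d))) ≤
        (Measure.pi fun _ : Fin 2 × Fin N => uniformSphere d r)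
          {z | (respectfulSet ε (S ∪ S' z)).Nonempty →
            ∃ f ∈ respectfulSet ε (S ∪ S' z),
              clsMarginAug f S (S' z) ≤
                ((Real.sqrt (C₁ * Real.log (2 * (N : ℝ) / d) / d) * r : ℝ) : EReal)} := by
  refine ⟨9 * Real.exp 9, 1, by positivity, one_pos, ?_⟩
  intro d N hd hN x₁ x₂ ε r hr S hS S' hS'
  obtain ⟨hprob, hsph⟩ := uniformSphere_sphere hd r hr
  have hG : (Measure.pi fun _ : Fin 2 × Fin N => uniformSphere d r)
      (Set.pi univ fun _ => sphere (0 : Euc d) r) = 1 := by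
    rw [Measure.pi_pi]; simp [hsph]
  calc _ ≤ (1 : ℝ≥0∞) := by
        apply ENNReal.ofReal_le_one.2
        linarith [Real.exp_pos (-1 * d * Real.log ((N : ℝ) / d))]
    _ = _ := hG.symm
    _ ≤ _ := measure_mono ?_
  intro z hz hne
  obtain ⟨g, -, hg⟩ := hne
  set T := S ∪ S' z with hT
  let f : Euc d → ℝ := fun y =>
    if ∃ A ⊆ posPts T, circumradius A ≤ ε ∧ y ∈ convexHull ℝ A then 1 else -1
  have hf : ∀ y, f y = if ∃ A ⊆ posPts T, circumradius A ≤ ε ∧ y ∈ convexHull ℝ A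
    then 1 else -1 := fun _ => rfl
  refine ⟨f, ⟨?_, ?_, ?_⟩, ?_⟩
  · intro y
    rw [hf]
    split_ifs
    · exact Or.inl rfl
    · exact Or.inr rfl
  · intro A hA hc y hy
    rw [hf, if_pos ⟨A, hA, hc, hy⟩]
  · intro B hB hc y hy
    rw [hf, if_neg]
    rintro ⟨A, hA, hcA, hyA⟩
    have h1 := hg.1 A hA hcA y hyA
    have h2 := hg.2 B hB hc y hy
    linarith
  rw [clsMarginAug]
  split_ifs with hsep
  swap
  · exact bot_le
  rw [EReal.coe_le_coe_iff]
  have hmem : (x₁, (1 : ℝ)) ∈ S := by rw [hS]; simp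
  have hle : clsMargin f S ≤ Metric.infDist x₁ (f ⁻¹' {-1}) :=
    ciInf_le (f := fun p : S => Metric.infDist (p : Euc d × ℝ).1 (f ⁻¹' {-(p : Euc d × ℝ).2}))
      ⟨0, by rintro _ ⟨p, rfl⟩; exact Metric.infDist_nonneg⟩ ⟨_, hmem⟩
  refine hle.trans ?_
  by_contra hlt
  push Not at hlt
  let p : Option (Fin N) → Euc d := fun o => o.elim x₁ (fun j => x₁ + z (0, j))
  have hpos : posPts T ⊆ Set.range p := by
    intro y hy
    rcases hy with hy | hy
    · rw [hS] at hy
      rcases hy with hy | hy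
      · exact ⟨none, (congrArg Prod.fst hy).symm⟩
      · have := congrArg Prod.snd hy
        norm_num at this
    · rw [hS'] at hy
      obtain ⟨⟨i, j⟩, hij⟩ := hy
      fin_cases i
      · exact ⟨some j, by simpa [p] using congrArg Prod.fst hij⟩
      · have := congrArg Prod.snd hij
        norm_num at this
  refine not_ball_subset hd hN p x₁ r hr ?_ ?_
  · intro o
    cases o with
    | none => simpa [p] using hr.le
    | some j =>
      have := hz (0, j) (mem_univ _)
      simp only [mem_sphere_iff_norm, sub_zero] at this
      simp [p, this]
  · intro y hy
    by_contra hny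
    have hfy : f y = -1 := by
      rw [hf, if_neg]
      rintro ⟨A, hA, -, hyA⟩
      exact hny (convexHull_mono (hA.trans hpos) hyA)
    have h1 : Metric.infDist x₁ (f ⁻¹' {-1}) ≤ dist x₁ y := Metric.infDist_le_dist_of_mem hfy
    rw [mem_closedBall, dist_comm] at hy
    linarith
end

section
/- Let u₁,…,u_n, v₁,…,v_m be vectors in ℝ^d with n, m ≥ 1 and m < d. Suppose there exists a nonzero vector z ∈ ℝ^d such that ⟨u_i, z⟩ ≥ 0 for all i ∈ [n] and ⟨v_j, z⟩ ≥ 0 for all j ∈ [m]. Then there exists a nonzero vector z' ∈ ℝ^d such that ⟨u_i, z'⟩ ≥ 0 for all i ∈ [n], ⟨v_j, z'⟩ ≥ 0 for all j ∈ [m], and ⟨u_i, z'⟩ = 0 for some i ∈ [n]. -/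
open scoped RealInnerProductSpace ENNReal Classical
open Metric Set MeasureTheory

theorem shift_aux {d n : ℕ} (hn : 1 ≤ n) (u : Fin n → Euc d) (z y : Euc d)
    (hu : ∀ i, 0 < ⟪u i, z⟫) :
    ∃ t : ℝ, (∀ i, 0 ≤ ⟪u i, y⟫ + t * ⟪u i, z⟫) ∧ ∃ i, ⟪u i, y⟫ + t * ⟪u i, z⟫ = 0 := by
  obtain ⟨i, -, hi⟩ := Finset.exists_max_image (Finset.univ : Finset (Fin n))
    (fun i => -⟪u i, y⟫ / ⟪u i, z⟫) ⟨⟨0, hn⟩, Finset.mem_univ _⟩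
  refine ⟨-⟪u i, y⟫ / ⟪u i, z⟫, fun k => ?_, i, ?_⟩
  · have h := hi k (Finset.mem_univ _)
    rw [div_le_iff₀ (hu k)] at h
    linarith
  · rw [div_mul_cancel₀ _ (hu i).ne']
    ring

/-- Lemma A.2 of the paper: if `m < d` and some nonzero `z` has
nonnegative inner product with all the `u i` and `v j`, then there is a nonzero `z'`
with nonnegative inner products which is moreover orthogonal to some `u i`. -/
theorem exists_nonzero_vector_orthogonal_to_some_u {d n m : ℕ}
    (hn : 1 ≤ n) (hm : 1 ≤ m) (hmd : m < d)
    (u : Fin n → Euc d) (v : Fin m → Euc d)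
    (z : Euc d) (hz : z ≠ 0)
    (hu : ∀ i, 0 ≤ ⟪u i, z⟫) (hv : ∀ j, 0 ≤ ⟪v j, z⟫) :
    ∃ z' : Euc d, z' ≠ 0 ∧ (∀ i, 0 ≤ ⟪u i, z'⟫) ∧ (∀ j, 0 ≤ ⟪v j, z'⟫) ∧
      ∃ i, ⟪u i, z'⟫ = 0 := by
  by_cases h0 : ∃ i, ⟪u i, z⟫ = 0
  · exact ⟨z, hz, hu, hv, h0⟩
  push Not at h0
  have hp : ∀ i, 0 < ⟪u i, z⟫ := fun i => lt_of_le_of_ne (hu i) (h0 i).symm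
  let A : Euc d →ₗ[ℝ] (Fin m → ℝ) := LinearMap.pi fun j => (innerSL ℝ (v j)).toLinearMap
  have hA : ∀ x j, A x j = ⟪v j, x⟫ := fun x j => rfl
  have hrn := A.finrank_range_add_finrank_ker
  rw [finrank_euclideanSpace_fin] at hrn
  have hr : Module.finrank ℝ (LinearMap.range A) ≤ m := by
    simpa using (LinearMap.range A).finrank_le
  by_cases hz0 : A z = 0
  · have hy : ∃ y, (∀ j, 0 ≤ ⟪v j, y⟫) ∧ ∀ t : ℝ, y + t • z ≠ 0 := by
      by_cases hs : LinearMap.range A = ⊤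
      · obtain ⟨y, hy⟩ := LinearMap.range_eq_top.1 hs (fun _ => 1)
        refine ⟨y, fun j => ?_, fun t h => ?_⟩
        · rw [← hA, hy]; exact zero_le_one
        · have := congrFun (congrArg A h) ⟨0, hm⟩
          rw [map_add, map_smul, hz0, hy] at this
          simp at this
      · have hlt : Module.finrank ℝ (LinearMap.range A) < m := by
          simpa using Submodule.finrank_lt hs
        have hlt2 : ¬ (LinearMap.ker A ≤ Submodule.span ℝ {z}) := by
          intro hle
          have h1 := Submodule.finrank_mono hle
          rw [finrank_span_singleton hz] at h1
          omega
        obtain ⟨y, hyk, hyn⟩ := SetLike.not_le_iff_exists.1 hlt2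
        refine ⟨y, fun j => ?_, fun t h => hyn ?_⟩
        · rw [← hA, LinearMap.mem_ker.1 hyk]; exact le_rfl
        · rw [Submodule.mem_span_singleton]
          exact ⟨-t, by rw [neg_smul]; exact (eq_neg_of_add_eq_zero_left h).symm⟩
    obtain ⟨y, hy1, hy2⟩ := hy
    obtain ⟨t, ht1, ht2⟩ := shift_aux hn u z y hp
    refine ⟨y + t • z, hy2 t, ?_, ?_, ?_⟩
    · simpa only [inner_add_right, real_inner_smul_right] using ht1
    · intro j
      have : ⟪v j, z⟫ = 0 := by rw [← hA, hz0]; rfl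
      rw [inner_add_right, real_inner_smul_right, this, mul_zero, add_zero]
      exact hy1 j
    · simpa only [inner_add_right, real_inner_smul_right] using ht2
  · have hk : LinearMap.ker A ≠ ⊥ := by
      intro h
      rw [h, finrank_bot] at hrn
      omega
    obtain ⟨w, hwk, hw0⟩ := Submodule.exists_mem_ne_zero_of_ne_bot hk
    have fin : ∀ y, A y = 0 → y ≠ 0 → ∀ t : ℝ, 0 ≤ t →
        (∀ i, 0 ≤ ⟪u i, y⟫ + t * ⟪u i, z⟫) → (∃ i, ⟪u i, y⟫ + t * ⟪u i, z⟫ = 0) →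
        ∃ z' : Euc d, z' ≠ 0 ∧ (∀ i, 0 ≤ ⟪u i, z'⟫) ∧ (∀ j, 0 ≤ ⟪v j, z'⟫) ∧
          ∃ i, ⟪u i, z'⟫ = 0 := by
      intro y hy hy0 t ht h1 h2
      refine ⟨y + t • z, fun h => ?_, ?_, ?_, ?_⟩
      · have h3 := congrArg A h
        rw [map_add, map_smul, hy, zero_add, map_zero, smul_eq_zero] at h3
        rcases h3 with h3 | h3
        · rw [h3, zero_smul, add_zero] at h
          exact hy0 h
        · exact hz0 h3
      · simpa only [inner_add_right, real_inner_smul_right] using h1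
      · intro j
        have : ⟪v j, y⟫ = 0 := by rw [← hA, hy]; rfl
        rw [inner_add_right, real_inner_smul_right, this, zero_add]
        exact mul_nonneg ht (hv j)
      · simpa only [inner_add_right, real_inner_smul_right] using h2
    have hw := LinearMap.mem_ker.1 hwk
    obtain ⟨t, ht1, ht2⟩ := shift_aux hn u z w hp
    rcases le_or_gt 0 t with ht | ht
    · exact fin w hw hw0 t ht ht1 ht2
    · obtain ⟨s, hs1, hs2⟩ := shift_aux hn u z (-w) hp
      refine fin (-w) (by rw [map_neg, hw, neg_zero]) (neg_ne_zero.2 hw0) s ?_ hs1 hs2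
      obtain ⟨i, hi⟩ := hs2
      rw [inner_neg_right] at hi
      have := ht1 i
      by_contra hneg
      push Not at hneg
      nlinarith [hp i, mul_pos_of_neg_of_neg ht hneg, mul_neg_of_neg_of_pos ht (hp i), mul_neg_of_neg_of_pos hneg (hp i)]
end

section
/- Let S ⊆ ℝ^d × {−1,+1} be a finite training set with X₊ and X₋ nonempty, and suppose R_ε(S) ≠ ∅. If 0 < r ≤ ε < d(X₊,X₋)/4, then for every artificial set S' ⊆ S_r, the set R_ε(S ∪ S') is nonempty. -/
open scoped RealInnerProductSpace ENNReal Classical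
open Metric Set MeasureTheory

theorem aux_near {d : ℕ} (A : Set (Euc d)) (c x : Euc d) (hx : x ∈ convexHull ℝ A) :
    ∃ a ∈ A, edist x a ≤ edist c a := by
  by_contra! h
  have hsub : A ⊆ {y | ⟪c - x, x⟫ < ⟪c - x, y⟫} := by
    intro a ha
    have h1 := h a ha
    rw [edist_dist, edist_dist, ENNReal.ofReal_lt_ofReal_iff_of_nonneg dist_nonneg,
      dist_comm c, dist_comm x, dist_eq_norm, dist_eq_norm] at h1
    have h2 : ‖a - c‖ ^ 2 < ‖a - x‖ ^ 2 := by gcongr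
    have h3 : a - c = (a - x) - (c - x) := by abel
    rw [h3, norm_sub_sq_real] at h2
    have h4 : ⟪a - x, c - x⟫ = ⟪c - x, a⟫ - ⟪c - x, x⟫ := by
      rw [real_inner_comm, inner_sub_right]
    simp only [mem_ofPred_eq]
    nlinarith [sq_nonneg ‖c - x‖]
  have hconv : Convex ℝ {y | ⟪c - x, x⟫ < ⟪c - x, y⟫} :=
    convex_halfSpace_gt (f := fun y => ⟪c - x, y⟫)
      ⟨fun _ _ => inner_add_right _ _ _, fun _ _ => inner_smul_right _ _ _⟩ _
  have hfin := convexHull_min hsub hconv hx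
  simp only [mem_ofPred_eq] at hfin
  exact lt_irrefl _ hfin

theorem aux_key {d : ℕ} (A P : Set (Euc d)) (ε D : ℝ≥0∞) (hA : ∀ a ∈ A, infEDist a P ≤ ε)
    (hc : circumradius A ≤ ε) (hD : ε < D / 4) (x : Euc d) (hx : x ∈ convexHull ℝ A) :
    infEDist x P < D / 2 := by
  have hc' := hc.trans_lt hD
  unfold circumradius at hc'
  obtain ⟨c, hc⟩ := iInf_lt_iff.1 hc'
  obtain ⟨a, ha, hxa⟩ := aux_near A c x hx
  have h1 : edist x a < D / 4 :=
    (hxa.trans (le_iSup₂ (f := fun x (_ : x ∈ A) => edist c x) a ha)).trans_lt hc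
  have h2 : D / 4 + D / 4 = D / 2 := by
    have : D / 4 = D / 2 / 2 := by
      rw [div_eq_mul_inv, div_eq_mul_inv, div_eq_mul_inv, mul_assoc,
        ← ENNReal.mul_inv (by simp) (by simp)]
      norm_num
    rw [this, ENNReal.add_halves]
  calc infEDist x P ≤ infEDist a P + edist x a := infEDist_le_infEDist_add_edist
    _ < D / 4 + D / 4 := ENNReal.add_lt_add ((hA a ha).trans_lt hD) h1
    _ = D / 2 := h2

theorem aux_le {d : ℕ} (P : Set (Euc d)) (hP : P.Nonempty) (ε : ℝ≥0∞) (r : ℝ)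
    (hrε : ENNReal.ofReal r ≤ ε) (a : Euc d) (h : a ∈ P ∨ infDist a P ≤ r) :
    infEDist a P ≤ ε := by
  rcases h with h | h
  · rw [infEDist_zero_of_mem h]; exact zero_le
  · refine le_trans ?_ hrε
    rw [← ENNReal.ofReal_toReal (infEDist_ne_top hP)]
    exact ENNReal.ofReal_le_ofReal h

/-- Lemma A.5 of the paper: if `R_ε(S) ≠ ∅` and
`0 < r ≤ ε < d(X₊,X₋)/4`, then for every `S' ⊆ S_r` the set `R_ε(S ∪ S')` is
nonempty. -/
theorem respectful_set_nonempty_of_bounded_augmentation {d : ℕ}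
    (S : Set (Euc d × ℝ)) (hSfin : S.Finite) (hSlab : LabelsPM S)
    (hpos : (posPts S).Nonempty) (hneg : (negPts S).Nonempty)
    (ε : ℝ≥0∞) (hne : (respectfulSet ε S).Nonempty)
    (r : ℝ) (hr : 0 < r) (hrε : ENNReal.ofReal r ≤ ε)
    (hεd : ε < setSepDist (posPts S) (negPts S) / 4) :
    ∀ S' ⊆ ballAug S r, (respectfulSet ε (S ∪ S')).Nonempty := by
  intro S' hS'
  set D := setSepDist (posPts S) (negPts S) with hDdef
  have hp : ∀ a ∈ posPts (S ∪ S'), infEDist a (posPts S) ≤ ε := by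
    intro a ha
    refine aux_le _ hpos ε r hrε a ?_
    rcases ha with ha | ha
    · exact Or.inl ha
    · rcases hS' ha with h | h
      · exact Or.inr h.2
      · exact absurd h.1 (by norm_num)
  have hn : ∀ a ∈ negPts (S ∪ S'), infEDist a (negPts S) ≤ ε := by
    intro a ha
    refine aux_le _ hneg ε r hrε a ?_
    rcases ha with ha | ha
    · exact Or.inl ha
    · rcases hS' ha with h | h
      · exact absurd h.1 (by norm_num)
      · exact Or.inr h.2
  refine ⟨fun x => if infEDist x (posPts S) < D / 2 then 1 else -1, ?_, ?_, ?_⟩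
  · intro x
    by_cases h : infEDist x (posPts S) < D / 2 <;> simp [h]
  · intro A hA hc x hx
    exact if_pos (aux_key A _ ε D (fun a ha => hp a (hA ha)) hc hεd x hx)
  · intro B hB hc x hx
    have h1 := aux_key B _ ε D (fun a ha => hn a (hB ha)) hc hεd x hx
    refine if_neg fun h2 => ?_
    obtain ⟨q, hq, hxq⟩ := infEDist_lt_iff.1 h1
    obtain ⟨p, hp', hxp⟩ := infEDist_lt_iff.1 h2
    have h3 : D ≤ edist p q :=
      (iInf₂_le p hp').trans (infEDist_le_edist_of_mem hq)
    have h4 : edist p q < D := by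
      calc edist p q ≤ edist p x + edist x q := edist_triangle _ _ _
        _ < D / 2 + D / 2 := ENNReal.add_lt_add (by rwa [edist_comm]) hxq
        _ = D := ENNReal.add_halves D
    exact absurd h3 (not_le.2 h4)
end
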